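/- Assume (K0)–(K3) and let K be a compact subset of Ω with positive Lebesgue measure. Then 𝒢(χ_K) ≍ δ^γ on Ω, i.e. there is a constant C > 0 (depending on K) such that C⁻¹ δ(x)^γ ≤ 𝒢(χ_K)(x) ≤ C δ(x)^γ for every x ∈ Ω. -/

import Mathlib

/-!
Write `δ` for the distance to `∂Ω` and `r = |x - y|`. As `δ` is 1-Lipschitz,
`δ(x) δ(y) / (δ(y) + r)² ≤ min (δ(x) δ(y) / r²) 1 ≤ 4 δ(x) / δ(y)`, and `δ(y)` stays away from `0`
and from `∞` for `y ∈ K`. Hence `𝔾(x, y) ≍ δ(x) ^ γ * r ^ p` for `x ∈ Ω`, `y ∈ K`, with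
`p = 2s - n`, and it remains to see that `x ↦ ∫_K |x - y| ^ p dy` is bounded above and away from
zero on `Ω`. The upper bound holds because `|z| ^ p` is locally integrable for `p > -n`; for the
lower bound, remove from `K` a ball around `x` so small that it cannot exhaust `K`: on the rest `r`
is bounded above and below.
-/

open MeasureTheory Metric Set Filter Topology

noncomputable section

abbrev Euc (n : ℕ) : Type := EuclideanSpace ℝ (Fin n)

/-- Distance to the boundary of `Ω`. -/
noncomputable def bdist {n : ℕ} (Ω : Set (Euc n)) (x : Euc n) : ℝ :=
  Metric.infDist x (frontier Ω)

/-- The two-sided model kernel `H(x,y)` of hypothesis (K2). -/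
noncomputable def Hker {n : ℕ} (Ω : Set (Euc n)) (s γ : ℝ) (x y : Euc n) : ℝ :=
  dist x y ^ (2 * s - (n : ℝ)) *
    (min (bdist Ω x * bdist Ω y / dist x y ^ (2 : ℝ)) 1) ^ γ

/-- The Green operator `𝒢(f)(x) = ∫_Ω 𝔾(x,y) f(y) dy` of hypothesis (K0). -/
noncomputable def Gop {n : ℕ} (Ω : Set (Euc n)) (G : Euc n → Euc n → ℝ)
    (f : Euc n → ℝ) (x : Euc n) : ℝ :=
  ∫ y in Ω, G x y * f y

section RealInequalities

variable {a b r t : ℝ}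

lemma mul_div_add_sq_le_min (ha : 0 ≤ a) (hb : 0 ≤ b) (hr : 0 < r) (h : a ≤ b + r) :
    a * (b / (b + r) ^ 2) ≤ min (a * b / r ^ 2) 1 := by
  rw [← mul_div_assoc]
  refine le_min ?_ ?_
  · gcongr
    linarith
  · rw [div_le_one (by positivity)]
    calc a * b ≤ (b + r) * (b + r) := by gcongr; linarith
      _ = (b + r) ^ 2 := (sq _).symm

lemma min_le_four_mul_div (ha : 0 ≤ a) (hb : 0 < b) (h : b ≤ a + r) :
    min (a * b / r ^ 2) 1 ≤ 4 * a / b := by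
  rcases le_or_gt r (b / 2) with hr | hr
  · refine (min_le_right _ _).trans ((one_le_div hb).2 ?_)
    linarith
  · calc min (a * b / r ^ 2) 1 ≤ a * b / r ^ 2 := min_le_left _ _
      _ ≤ a * b / (b / 2) ^ 2 := by gcongr
      _ = 4 * a / b := by field_simp; norm_num

lemma rpow_mem_uIcc (ha : 0 < a) (ht : t ∈ Icc a b) (p : ℝ) : t ^ p ∈ uIcc (a ^ p) (b ^ p) := by
  have hsub : uIcc a b ⊆ Ioi 0 := uIcc_of_le (ht.1.trans ht.2) ▸ fun _ hu => ha.trans_le hu.1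
  rcases le_total 0 p with hp | hp
  · exact ((Real.monotoneOn_rpow_Ici_of_exponent_nonneg hp).mono
      (hsub.trans Ioi_subset_Ici_self)).mapsTo_uIcc (Icc_subset_uIcc ht)
  · exact ((Real.antitoneOn_rpow_Ioi_of_exponent_nonpos hp).mono hsub).mapsTo_uIcc
      (Icc_subset_uIcc ht)

lemma exists_pos_inv_le_and_le (ha : 0 < a) (b : ℝ) : ∃ C : ℝ, 0 < C ∧ C⁻¹ ≤ a ∧ b ≤ C :=
  ⟨max a⁻¹ b, lt_max_of_lt_left (inv_pos.2 ha), inv_le_of_inv_le₀ ha (le_max_left _ _),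
    le_max_right _ _⟩

end RealInequalities

section ModelKernel

/-- The kernel `H` of hypothesis (K2) on a metric space, with an arbitrary real exponent `p` in
place of `2s - n`. -/
def modelKernel {X : Type*} [PseudoMetricSpace X] (Ω : Set X) (p γ : ℝ) (x y : X) : ℝ :=
  dist x y ^ p *
    min (infDist x (frontier Ω) * infDist y (frontier Ω) / dist x y ^ 2) 1 ^ γ

lemma Hker_eq_modelKernel {n : ℕ} (Ω : Set (Euc n)) (s γ : ℝ) :
    Hker Ω s γ = modelKernel Ω (2 * s - n) γ := by
  ext x y
  simp only [Hker, modelKernel, bdist, Real.rpow_two]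

lemma exists_pos_forall_dist_lt {X : Type*} [PseudoMetricSpace X] {S T : Set X}
    (hS : Bornology.IsBounded S) (hT : Bornology.IsBounded T) :
    ∃ D > 0, ∀ x ∈ S, ∀ y ∈ T, dist x y < D :=
  ⟨diam (S ∪ T) + 1, by positivity, fun _ hx _ hy =>
    (dist_le_diam_of_mem (hS.union hT) (.inl hx) (.inr hy)).trans_lt (lt_add_one _)⟩

variable {X : Type*} [MetricSpace X] [ProperSpace X] [NoncompactSpace X] [PreconnectedSpace X]
  {Ω K : Set X}

lemma infDist_frontier_pos (hΩo : IsOpen Ω) (hΩb : Bornology.IsBounded Ω) {x : X} (hx : x ∈ Ω) :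
    0 < infDist x (frontier Ω) := by
  have hΩne : Ω ≠ univ := by
    rintro rfl
    exact noncompact_univ X (isCompact_of_isClosed_isBounded isClosed_univ hΩb)
  have hne : (frontier Ω).Nonempty := nonempty_frontier_iff.2 ⟨⟨x, hx⟩, hΩne⟩
  exact (isClosed_frontier.notMem_iff_infDist_pos hne).1
    (disjoint_right.1 (disjoint_frontier_iff_isOpen.2 hΩo) hx)

lemma exists_infDist_frontier_mem_Icc (hΩo : IsOpen Ω) (hΩb : Bornology.IsBounded Ω)
    (hKΩ : closure K ⊆ Ω) :
    ∃ d > 0, ∃ M, ∀ y ∈ K, infDist y (frontier Ω) ∈ Icc d M := by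
  have hK : IsCompact (closure K) := (hΩb.subset (subset_closure.trans hKΩ)).isCompact_closure
  have hcont : ContinuousOn (infDist · (frontier Ω)) (closure K) :=
    (continuous_infDist_pt _).continuousOn
  obtain ⟨d, hd, hdK⟩ :=
    hK.exists_forall_le' hcont fun y hy => infDist_frontier_pos hΩo hΩb (hKΩ hy)
  obtain ⟨M, hM⟩ := hK.bddAbove_image hcont
  exact ⟨d, hd, M, fun y hy =>
    ⟨hdK y (subset_closure hy), hM (mem_image_of_mem _ (subset_closure hy))⟩⟩

lemma exists_cutoff_bounds (hΩo : IsOpen Ω) (hΩb : Bornology.IsBounded Ω) (hKΩ : closure K ⊆ Ω) :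
    ∃ a > 0, ∃ b > 0, ∀ x ∈ Ω, ∀ y ∈ K, x ≠ y →
      min (infDist x (frontier Ω) * infDist y (frontier Ω) / dist x y ^ 2) 1 /
        infDist x (frontier Ω) ∈ Icc a b := by
  have hKΩ' : K ⊆ Ω := subset_closure.trans hKΩ
  obtain ⟨d, hd, M, hdM⟩ := exists_infDist_frontier_mem_Icc hΩo hΩb hKΩ
  obtain ⟨D, hD, hdist⟩ := exists_pos_forall_dist_lt hΩb (hΩb.subset hKΩ')
  refine ⟨d / (|M| + D) ^ 2, by positivity, 4 / d, by positivity, fun x hx y hy hxy => ?_⟩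
  have hδx := infDist_frontier_pos hΩo hΩb hx
  have hδy := infDist_frontier_pos hΩo hΩb (hKΩ' hy)
  have hr : 0 < dist x y := dist_pos.2 hxy
  obtain ⟨hdy, hyM⟩ := hdM y hy
  rw [mem_Icc, le_div_iff₀' hδx, div_le_iff₀ hδx]
  constructor
  · calc infDist x (frontier Ω) * (d / (|M| + D) ^ 2)
        ≤ infDist x (frontier Ω) *
            (infDist y (frontier Ω) / (infDist y (frontier Ω) + dist x y) ^ 2) := by
          gcongr
          · exact hyM.trans (le_abs_self M)
          · exact (hdist x hx y hy).le
      _ ≤ _ := mul_div_add_sq_le_min hδx.le hδy.le hr infDist_le_infDist_add_dist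
  · calc _ ≤ 4 * infDist x (frontier Ω) / infDist y (frontier Ω) :=
          min_le_four_mul_div hδx.le hδy (dist_comm x y ▸ infDist_le_infDist_add_dist)
      _ ≤ 4 * infDist x (frontier Ω) / d := by gcongr
      _ = 4 / d * infDist x (frontier Ω) := by ring

lemma exists_modelKernel_bounds (hΩo : IsOpen Ω) (hΩb : Bornology.IsBounded Ω)
    (hKΩ : closure K ⊆ Ω) (p γ : ℝ) :
    ∃ a > 0, ∃ b > 0, ∀ x ∈ Ω, ∀ y ∈ K, x ≠ y →
      a * infDist x (frontier Ω) ^ γ * dist x y ^ p ≤ modelKernel Ω p γ x y ∧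
      modelKernel Ω p γ x y ≤ b * infDist x (frontier Ω) ^ γ * dist x y ^ p := by
  obtain ⟨a, ha, b, hb, hab⟩ := exists_cutoff_bounds hΩo hΩb hKΩ
  refine ⟨min (a ^ γ) (b ^ γ), by positivity, max (a ^ γ) (b ^ γ), by positivity,
    fun x hx y hy hxy => ?_⟩
  have hδ := infDist_frontier_pos hΩo hΩb hx
  have hcut := rpow_mem_uIcc ha (hab x hx y hy hxy) γ
  have hmin : 0 ≤ min (infDist x (frontier Ω) * infDist y (frontier Ω) / dist x y ^ 2) 1 :=
    le_min (div_nonneg (mul_nonneg hδ.le infDist_nonneg) (sq_nonneg _)) zero_le_one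
  rw [Real.div_rpow hmin hδ.le, uIcc, mem_Icc, le_div_iff₀ (by positivity),
    div_le_iff₀ (by positivity)] at hcut
  rw [modelKernel, mul_comm (dist x y ^ p)]
  exact ⟨by gcongr; exact hcut.1, by gcongr; exact hcut.2⟩

end ModelKernel

section RieszPotential

lemma preimage_sub_left_ball_zero {E : Type*} [SeminormedAddCommGroup E] (x : E) (R : ℝ) :
    (x - ·) ⁻¹' ball 0 R = ball x R := by
  ext y
  rw [mem_preimage, mem_ball_zero_iff, mem_ball', dist_eq_norm]

lemma exists_ball_measure_lt {X : Type*} [PseudoMetricSpace X] [MeasurableSpace X]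
    (μ : Measure X) [μ.OuterRegular] [NullSingletonClass μ] (x : X) {ε : ENNReal} (hε : 0 < ε) :
    ∃ r > 0, μ (ball x r) < ε := by
  obtain ⟨U, hxU, hUo, hμU⟩ :=
    ({x} : Set X).exists_isOpen_lt_of_lt ε ((measure_singleton (μ := μ) x).trans_lt hε)
  obtain ⟨r, hr, hrU⟩ := Metric.isOpen_iff.1 hUo x (singleton_subset_iff.1 hxU)
  exact ⟨r, hr, (measure_mono hrU).trans_lt hμU⟩

variable {E : Type*} [NormedAddCommGroup E] [MeasurableSpace E] [BorelSpace E]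
  (μ : Measure E) [μ.IsAddHaarMeasure] {p : ℝ} {S K : Set E}

variable [NormedSpace ℝ E] [FiniteDimensional ℝ E]

lemma setIntegral_ball_dist_rpow (x : E) (R : ℝ) :
    ∫ y in ball x R, dist x y ^ p ∂μ = ∫ z in ball 0 R, ‖z‖ ^ p ∂μ := by
  simp only [dist_eq_norm, ← preimage_sub_left_ball_zero x R]
  exact (Measure.measurePreserving_sub_left μ x).setIntegral_preimage_emb
    (MeasurableEquiv.subLeft x).measurableEmbedding (‖·‖ ^ p) _

variable [Nontrivial E]

lemma locallyIntegrable_norm_rpow (hp : -(Module.finrank ℝ E : ℝ) < p) :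
    LocallyIntegrable (fun z : E => ‖z‖ ^ p) μ := by
  refine locallyIntegrable_of_norm_le_rpow (C := 1) Module.finrank_pos (neg_lt.1 hp)
    (ae_of_all _ fun z => ?_) (measurable_norm.pow_const p).aestronglyMeasurable
  rw [Real.norm_of_nonneg (by positivity), neg_neg, one_mul]

lemma integrableOn_dist_rpow (hp : -(Module.finrank ℝ E : ℝ) < p) (hK : Bornology.IsBounded K)
    (x : E) : IntegrableOn (fun y => dist x y ^ p) K μ := by
  obtain ⟨R, hR⟩ := hK.subset_ball x
  have hball : IntegrableOn (fun z : E => ‖z‖ ^ p) (ball 0 R) μ :=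
    ((locallyIntegrable_norm_rpow μ hp).integrableOn_isCompact
      (isCompact_closedBall 0 R)).mono_set ball_subset_closedBall
  refine IntegrableOn.mono_set ?_ hR
  simp only [dist_eq_norm, ← preimage_sub_left_ball_zero x R]
  exact ((Measure.measurePreserving_sub_left μ x).integrableOn_comp_preimage
    (MeasurableEquiv.subLeft x).measurableEmbedding).2 hball

lemma exists_setIntegral_dist_rpow_le (hp : -(Module.finrank ℝ E : ℝ) < p)
    (hS : Bornology.IsBounded S) (hK : Bornology.IsBounded K) :
    ∃ C, ∀ x ∈ S, ∫ y in K, dist x y ^ p ∂μ ≤ C := by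
  obtain ⟨D, -, hD⟩ := exists_pos_forall_dist_lt hS hK
  refine ⟨∫ z in ball 0 D, ‖z‖ ^ p ∂μ, fun x hx => ?_⟩
  calc ∫ y in K, dist x y ^ p ∂μ ≤ ∫ y in ball x D, dist x y ^ p ∂μ :=
        setIntegral_mono_set (integrableOn_dist_rpow μ hp isBounded_ball x)
          (ae_of_all _ fun y => by positivity)
          (LE.le.eventuallyLE fun y hy => mem_ball'.2 (hD x hx y hy))
    _ = ∫ z in ball 0 D, ‖z‖ ^ p ∂μ := setIntegral_ball_dist_rpow μ x D


lemma exists_pos_le_setIntegral_dist_rpow (hp : -(Module.finrank ℝ E : ℝ) < p)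
    (hS : Bornology.IsBounded S) (hKm : MeasurableSet K) (hK : Bornology.IsBounded K)
    (hμK : 0 < μ K) :
    ∃ c > 0, ∀ x ∈ S, c ≤ ∫ y in K, dist x y ^ p ∂μ := by
  obtain ⟨r, hr, hμr⟩ := exists_ball_measure_lt μ 0 hμK
  obtain ⟨D, hD, hdist⟩ := exists_pos_forall_dist_lt hS hK
  have hμ : 0 < μ.real K - μ.real (ball 0 r) :=
    sub_pos.2 ((ENNReal.toReal_lt_toReal measure_ball_lt_top.ne hK.measure_lt_top.ne).2 hμr)
  refine ⟨min (r ^ p) (D ^ p) * (μ.real K - μ.real (ball 0 r)), by positivity, fun x hx => ?_⟩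
  have hint := integrableOn_dist_rpow μ hp hK x
  have hfar : ∀ y ∈ K \ ball x r, min (r ^ p) (D ^ p) ≤ dist x y ^ p := fun y hy =>
    (rpow_mem_uIcc hr ⟨not_lt.1 fun h => hy.2 (mem_ball'.2 h), (hdist x hx y hy.1).le⟩ p).1
  calc min (r ^ p) (D ^ p) * (μ.real K - μ.real (ball 0 r))
      ≤ min (r ^ p) (D ^ p) * μ.real (K \ ball x r) := by
        rw [← Measure.addHaar_real_ball_center μ x]
        gcongr
        exact le_measureReal_sdiff
    _ ≤ ∫ y in K \ ball x r, dist x y ^ p ∂μ :=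
        setIntegral_ge_of_const_le_real (hKm.diff measurableSet_ball)
          (hK.subset sdiff_subset).measure_lt_top.ne hfar (hint.mono_set sdiff_subset)
    _ ≤ ∫ y in K, dist x y ^ p ∂μ :=
        setIntegral_mono_set hint (ae_of_all _ fun y => by positivity) sdiff_subset.eventuallyLE

end RieszPotential

section GreenOperator

lemma Gop_indicator_one {n : ℕ} {Ω K : Set (Euc n)} (hK : MeasurableSet K) (hKΩ : K ⊆ Ω)
    (G : Euc n → Euc n → ℝ) (x : Euc n) :
    Gop Ω G (K.indicator fun _ => 1) x = ∫ y in K, G x y := by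
  have hmul : (fun y => G x y * K.indicator (fun _ => 1) y) = K.indicator (G x) := by
    ext y
    simp only [← indicator_mul_right, mul_one]
  rw [Gop, hmul, setIntegral_indicator hK, inter_eq_self_of_subset_right hKΩ]

variable {E : Type*} [NormedAddCommGroup E] [NormedSpace ℝ E] [FiniteDimensional ℝ E]
  [Nontrivial E] [MeasurableSpace E] [BorelSpace E] (μ : Measure E) [μ.IsAddHaarMeasure]
  {Ω K : Set E} {p Λ : ℝ} {G : E → E → ℝ}

lemma setIntegral_bounds_of_dist_rpow {g : E → ℝ} {x : E} {A B : ℝ}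
    (hp : -(Module.finrank ℝ E : ℝ) < p) (hKm : MeasurableSet K) (hK : Bornology.IsBounded K)
    (hg : AEStronglyMeasurable g (μ.restrict K))
    (hgA : ∀ y ∈ K, x ≠ y → A * dist x y ^ p ≤ g y)
    (hgB : ∀ y ∈ K, x ≠ y → g y ≤ B * dist x y ^ p) :
    A * ∫ y in K, dist x y ^ p ∂μ ≤ ∫ y in K, g y ∂μ ∧
      ∫ y in K, g y ∂μ ≤ B * ∫ y in K, dist x y ^ p ∂μ := by
  have hoff : ∀ᵐ y ∂μ.restrict K, y ∈ K ∧ x ≠ y := by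
    filter_upwards [ae_restrict_mem hKm, ae_restrict_of_ae (Measure.ae_ne μ x)] with y hy hyx
    exact ⟨hy, hyx.symm⟩
  have hint := integrableOn_dist_rpow μ hp hK x
  have hA : ∀ᵐ y ∂μ.restrict K, A * dist x y ^ p ≤ g y := hoff.mono fun y hy => hgA y hy.1 hy.2
  have hB : ∀ᵐ y ∂μ.restrict K, g y ≤ B * dist x y ^ p := hoff.mono fun y hy => hgB y hy.1 hy.2
  have hgint : Integrable g (μ.restrict K) :=
    integrable_of_le_of_le hg hA hB (hint.const_mul A) (hint.const_mul B)
  rw [← integral_const_mul, ← integral_const_mul]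
  exact ⟨integral_mono_ae (hint.const_mul A) hgint hA, integral_mono_ae hgint (hint.const_mul B) hB⟩

theorem statement4_general (hΩo : IsOpen Ω) (hΩb : Bornology.IsBounded Ω)
    (hp : -(Module.finrank ℝ E : ℝ) < p) (γ : ℝ) (hΛ : 0 < Λ)
    (hGm : ∀ x ∈ Ω, AEStronglyMeasurable (G x) (μ.restrict K))
    (hG : ∀ x ∈ Ω, ∀ y ∈ Ω, x ≠ y →
      Λ⁻¹ * modelKernel Ω p γ x y ≤ G x y ∧ G x y ≤ Λ * modelKernel Ω p γ x y)
    (hKm : MeasurableSet K) (hKΩ : closure K ⊆ Ω) (hμK : 0 < μ K) :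
    ∃ C : ℝ, 0 < C ∧ ∀ x ∈ Ω,
      C⁻¹ * infDist x (frontier Ω) ^ γ ≤ ∫ y in K, G x y ∂μ ∧
      ∫ y in K, G x y ∂μ ≤ C * infDist x (frontier Ω) ^ γ := by
  have hKΩ' : K ⊆ Ω := subset_closure.trans hKΩ
  have hKb : Bornology.IsBounded K := hΩb.subset hKΩ'
  obtain ⟨a, ha, b, hb, hab⟩ := exists_modelKernel_bounds hΩo hΩb hKΩ p γ
  obtain ⟨i, hi, hiK⟩ := exists_pos_le_setIntegral_dist_rpow μ hp hΩb hKm hKb hμK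
  obtain ⟨I, hIK⟩ := exists_setIntegral_dist_rpow_le μ hp hΩb hKb
  obtain ⟨C, hC, hCl, hCu⟩ :=
    exists_pos_inv_le_and_le (a := Λ⁻¹ * a * i) (by positivity) (Λ * b * I)
  refine ⟨C, hC, fun x hx => ?_⟩
  set w := infDist x (frontier Ω) ^ γ
  have hw : 0 ≤ w := Real.rpow_nonneg infDist_nonneg γ
  have hGlower : ∀ y ∈ K, x ≠ y → Λ⁻¹ * (a * w) * dist x y ^ p ≤ G x y := fun y hy hxy =>
    calc _ = Λ⁻¹ * (a * w * dist x y ^ p) := mul_assoc _ _ _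
      _ ≤ Λ⁻¹ * modelKernel Ω p γ x y := by gcongr; exact (hab x hx y hy hxy).1
      _ ≤ G x y := (hG x hx y (hKΩ' hy) hxy).1
  have hGupper : ∀ y ∈ K, x ≠ y → G x y ≤ Λ * (b * w) * dist x y ^ p := fun y hy hxy =>
    calc G x y ≤ Λ * modelKernel Ω p γ x y := (hG x hx y (hKΩ' hy) hxy).2
      _ ≤ Λ * (b * w * dist x y ^ p) := by gcongr; exact (hab x hx y hy hxy).2
      _ = _ := (mul_assoc _ _ _).symm
  obtain ⟨hlower, hupper⟩ :=
    setIntegral_bounds_of_dist_rpow μ hp hKm hKb (hGm x hx) hGlower hGupper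
  constructor
  · calc C⁻¹ * w ≤ Λ⁻¹ * a * i * w := by gcongr
      _ = Λ⁻¹ * (a * w) * i := by ring
      _ ≤ Λ⁻¹ * (a * w) * ∫ y in K, dist x y ^ p ∂μ := by gcongr; exact hiK x hx
      _ ≤ _ := hlower
  · calc _ ≤ Λ * (b * w) * ∫ y in K, dist x y ^ p ∂μ := hupper
      _ ≤ Λ * (b * w) * I := by gcongr; exact hIK x hx
      _ = Λ * b * I * w := by ring
      _ ≤ C * w := by gcongr

end GreenOperator

/-- for `K ⋐ Ω` compact of positive measure, `𝒢(χ_K) ≍ δ^γ` on Ω. -/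
theorem statement4 {n : ℕ} (Ω : Set (Euc n)) (s γ Λ : ℝ) (G : Euc n → Euc n → ℝ)
    (hΩo : IsOpen Ω) (hΩb : Bornology.IsBounded Ω) (hΩne : Ω.Nonempty)
    (hs0 : 0 < s) (hs1 : s ≤ 1) (hγ0 : 0 < γ) (hγ1 : γ ≤ 1) (hsn : 2 * s ≤ (n : ℝ))
    (hGm : Measurable (Function.uncurry G)) (hGpos : ∀ x y, 0 ≤ G x y)
    (hGsym : ∀ x y, G x y = G y x) (hΛ : 1 ≤ Λ)
    (hK2 : ∀ x ∈ Ω, ∀ y ∈ Ω, x ≠ y →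
      Λ⁻¹ * Hker Ω s γ x y ≤ G x y ∧ G x y ≤ Λ * Hker Ω s γ x y)
    (K : Set (Euc n)) (hK : IsCompact K) (hKΩ : K ⊆ Ω) (hKpos : 0 < volume K) :
    ∃ C : ℝ, 0 < C ∧ ∀ x ∈ Ω,
      C⁻¹ * bdist Ω x ^ γ ≤ Gop Ω G (K.indicator fun _ => 1) x ∧
      Gop Ω G (K.indicator fun _ => 1) x ≤ C * bdist Ω x ^ γ := by
  have : NeZero n := ⟨by rintro rfl; norm_num at hsn; linarith⟩
  simp only [Hker_eq_modelKernel] at hK2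
  simpa only [Gop_indicator_one hK.measurableSet hKΩ, bdist] using
    statement4_general volume hΩo hΩb (by rw [finrank_euclideanSpace_fin]; linarith) γ
      (one_pos.trans_le hΛ) (fun x _ => hGm.of_uncurry_left.aestronglyMeasurable) hK2
      hK.measurableSet (hK.isClosed.closure_eq.trans_subset hKΩ) hKpos
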